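/- Let p and q be coprime positive integers. For each cube root of unity ζ ∈ {1, ω, ω²} (ω = e^{2πi/3}), let f(p, ζ) denote the number of SU(3)-conjugacy classes of matrices A ∈ SU(3) with A^p = ζ·I having three pairwise distinct eigenvalues. Then 12·Σ_{ζ³=1} f(p, ζ)·f(q, ζ) = (p−1)·(p−2)·(q−1)·(q−2). (This sum is the number N_II of four-dimensional components of the irreducible SU(3) representation variety of the knot complement Z, so N_II = (p−1)(p−2)(q−1)(q−2)/12.) -/

import Mathlib

/-!
A matrix of `SU(3)` with three distinct eigenvalues is diagonalized by an element of `SU(3)` with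
its eigenvalues in any order (`exists_diagonalize`), so its conjugacy class is determined by its
spectrum. Hence `f(p, ζ)` counts the three-element sets of `p`-th roots of `ζ` with product `1`
(`countThree_eq`), and `6 f(p, ζ)` counts the ordered triples (`card_eigenTriples`).

Among the `p ^ 2` triples `(a, b, (a b)⁻¹)` of `p`-th roots of `ζ`, inclusion-exclusion over the
three diagonals gives `6 f(p, ζ) = p² - 3p + 2 e(p, ζ)` (`card_pairs`), where `e(p, ζ)` is the
number of cube roots of unity whose `p`-th power is `ζ`. If `3 ∤ p` then `e(p, ζ) = 1` for each
`ζ`, and if `3 ∣ p` then `e(p, 1) = 3` and `e(p, ω) = e(p, ω²) = 0`; in both cases the three values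
sum to `3`. By coprimality `3` fails to divide one of `p`, `q`, so one of the two factors
`f(p, ζ)`, `f(q, ζ)` is independent of `ζ`, and the sum of products follows.
-/

open Matrix in
/-- The special unitary group `SU(n)` of `n × n` complex matrices with determinant `1`,
as a subgroup of the unitary group. -/
noncomputable def SU (n : ℕ) : Subgroup (Matrix.unitaryGroup (Fin n) ℂ) where
  carrier := {A | (A : Matrix (Fin n) (Fin n) ℂ).det = 1}
  one_mem' := by simp
  mul_mem' := by
    intro a b ha hb
    show ((a * b : Matrix.unitaryGroup (Fin n) ℂ) : Matrix (Fin n) (Fin n) ℂ).det = 1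
    rw [Submonoid.coe_mul, Matrix.det_mul]
    rw [Set.mem_setOf_eq] at ha hb
    rw [ha, hb, mul_one]
  inv_mem' := by
    intro a ha
    show ((a⁻¹ : Matrix.unitaryGroup (Fin n) ℂ) : Matrix (Fin n) (Fin n) ℂ).det = 1
    rw [Set.mem_setOf_eq] at ha
    have : ((a⁻¹ : Matrix.unitaryGroup (Fin n) ℂ) : Matrix (Fin n) (Fin n) ℂ)
        = star (a : Matrix (Fin n) (Fin n) ℂ) := rfl
    rw [this]
    show (Matrix.conjTranspose _).det = 1
    rw [Matrix.det_conjTranspose, ha, star_one]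

/-- The underlying matrix of an element of `SU(n)`. -/
noncomputable abbrev matSU {n : ℕ} (A : SU n) : Matrix (Fin n) (Fin n) ℂ := A.val.val

/-- The number of conjugacy classes of a conjugation-invariant subset `S` of `SU(3)`:
the cardinality of the quotient of `S` by `A ∼ U·A·U⁻¹` for `U ∈ SU(3)`. -/
noncomputable def numConjClasses (S : Set (SU 3)) : ℕ :=
  Nat.card (Quotient (Setoid.mk
    (fun A B : S => ∃ U : SU 3, (B : SU 3) = U * (A : SU 3) * U⁻¹)
    (by
      constructor
      · intro A; exact ⟨1, by group⟩
      · rintro A B ⟨U, hU⟩; exact ⟨U⁻¹, by rw [hU]; group⟩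
      · rintro A B C ⟨U, hU⟩ ⟨V, hV⟩; exact ⟨V * U, by rw [hV, hU]; group⟩)))

/-- The cube root of unity `ω = e^{2πi/3}`. -/
noncomputable def omega3 : ℂ := Complex.exp (2 * Real.pi * Complex.I / 3)

/-- `f(p, ζ)`: the number of `SU(3)`-conjugacy classes of matrices `A ∈ SU(3)` with
`A^p = ζ·I` having three pairwise distinct eigenvalues. -/
noncomputable def countThree (p : ℕ) (ζ : ℂ) : ℕ :=
  numConjClasses {A : SU 3 | matSU A ^ p = ζ • (1 : Matrix (Fin 3) (Fin 3) ℂ) ∧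
    (spectrum ℂ (matSU A)).ncard = 3}

/-- `g(p, ζ)`: the number of `SU(3)`-conjugacy classes of matrices `A ∈ SU(3)` with
`A^p = ζ·I` having exactly two distinct eigenvalues. -/
noncomputable def countTwo (p : ℕ) (ζ : ℂ) : ℕ :=
  numConjClasses {A : SU 3 | matSU A ^ p = ζ • (1 : Matrix (Fin 3) (Fin 3) ℂ) ∧
    (spectrum ℂ (matSU A)).ncard = 2}

section

open Matrix

/-! ### Diagonalization in `SU(3)` -/

open scoped ComplexOrder in
lemma exists_unit_eigenvector {n : ℕ} {A : Matrix (Fin n) (Fin n) ℂ} {μ : ℂ}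
    (h : μ ∈ spectrum ℂ A) : ∃ v : Fin n → ℂ, star v ⬝ᵥ v = 1 ∧ A *ᵥ v = μ • v := by
  rw [← Matrix.spectrum_toLin', ← Module.End.hasEigenvalue_iff_mem_spectrum] at h
  obtain ⟨v, hv⟩ := h.exists_hasEigenvector
  have hAv : A *ᵥ v = μ • v := by simpa using hv.apply_eq_smul
  have hv0 : v ≠ 0 := hv.2
  have hpos : 0 < star v ⬝ᵥ v := Matrix.dotProduct_star_self_pos_iff.2 hv0
  obtain ⟨r, hr0, hr⟩ : ∃ r : ℝ, 0 < r ∧ star v ⬝ᵥ v = (r : ℂ) := by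
    rw [Complex.pos_iff] at hpos
    exact ⟨_, hpos.1, Complex.ext rfl (by simpa using hpos.2.symm)⟩
  refine ⟨((Real.sqrt r)⁻¹ : ℂ) • v, ?_, ?_⟩
  · rw [star_smul, smul_dotProduct, dotProduct_smul, hr]
    have h1 : (Real.sqrt r : ℂ) ≠ 0 := by
      exact_mod_cast (Real.sqrt_pos.2 hr0).ne'
    have h2 : (r : ℂ) = Real.sqrt r * Real.sqrt r := by
      exact_mod_cast (Real.mul_self_sqrt hr0.le).symm
    simp only [smul_eq_mul, star_inv₀, Complex.star_def, Complex.conj_ofReal]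
    rw [h2]
    field_simp
  · rw [mulVec_smul, hAv, smul_comm]

/-- Eigenvectors of a unitary matrix for distinct eigenvalues are orthogonal, since
`⟪v, w⟫ = ⟪A v, A w⟫ = conj a * b * ⟪v, w⟫` and `conj a = a⁻¹`. -/
lemma eigenvector_orthogonal {n : ℕ} {A : Matrix (Fin n) (Fin n) ℂ} (hA : star A * A = 1)
    {a b : ℂ} {v w : Fin n → ℂ} (hv1 : star v ⬝ᵥ v = 1) (hv : A *ᵥ v = a • v)
    (hw : A *ᵥ w = b • w) (hab : a ≠ b) : star v ⬝ᵥ w = 0 := by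
  have key : ∀ {c : ℂ} {u : Fin n → ℂ}, A *ᵥ u = c • u →
      star v ⬝ᵥ u = star a * c * (star v ⬝ᵥ u) := by
    intro c u hu
    have h1 : star (A *ᵥ v) ⬝ᵥ (A *ᵥ u) = star v ⬝ᵥ u := by
      rw [star_mulVec, ← dotProduct_mulVec, mulVec_mulVec, ← star_eq_conjTranspose, hA,
        one_mulVec]
    rw [hv, hu, star_smul, smul_dotProduct, dotProduct_smul, smul_eq_mul, smul_eq_mul,
      ← mul_assoc] at h1
    exact h1.symm
  have ha : star a * a = 1 := by
    have := key hv
    rw [hv1, mul_one] at this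
    exact this.symm
  by_contra h0
  have hb : star a * b = 1 := by
    have := key hw
    exact mul_right_cancel₀ h0 (by rw [one_mul]; exact this.symm)
  have ha0 : star a ≠ 0 := left_ne_zero_of_mul_eq_one ha
  exact hab (mul_left_cancel₀ ha0 (ha.trans hb.symm))

/-- A matrix of `SU(3)` with three distinct eigenvalues is diagonalized by an element of `SU(3)`,
with the eigenvalues in any prescribed order. -/
lemma exists_diagonalize (A : SU 3) (d : Fin 3 → ℂ) (hd : Function.Injective d)
    (hs : ∀ i, d i ∈ spectrum ℂ (matSU A)) :
    ∃ U : SU 3, matSU A * matSU U = matSU U * diagonal d := by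
  have hA : star (matSU A) * matSU A = 1 := mem_unitaryGroup_iff'.1 A.1.2
  choose v hv1 hv using fun i => exists_unit_eigenvector (hs i)
  set P : Matrix (Fin 3) (Fin 3) ℂ := of fun i j => v j i with hP
  have hPP : star P * P = 1 := by
    ext i j
    have h : (star P * P) i j = star (v i) ⬝ᵥ v j := by
      simp [mul_apply, dotProduct, hP, star_apply]
    rw [h]
    by_cases hij : i = j
    · subst hij; simp [hv1]
    · rw [eigenvector_orthogonal hA (hv1 i) (hv i) (hv j) (hd.ne hij), one_apply_ne hij]
  have hAP : matSU A * P = P * diagonal d := by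
    ext i j
    have h := congrFun (hv j) i
    rw [mul_diagonal]
    simpa [mul_apply, mulVec, dotProduct, hP, mul_comm] using h
  have hdet : star P.det * P.det = 1 := by
    have := congrArg det hPP
    rwa [det_mul, star_eq_conjTranspose, det_conjTranspose, det_one] at this
  have hdet0 : P.det ≠ 0 := right_ne_zero_of_mul_eq_one hdet
  -- Rescaling the first column by a phase makes the determinant equal to `1`.
  set c : Fin 3 → ℂ := ![P.det⁻¹, 1, 1] with hc
  have hcc : star (diagonal c) * diagonal c = 1 := by
    rw [star_eq_conjTranspose, diagonal_conjTranspose, diagonal_mul_diagonal, ← diagonal_one]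
    congr 1
    ext i
    fin_cases i
    · simp only [hc, Pi.star_apply]
      simp only [Fin.zero_eta, cons_val_zero, star_inv₀]
      rw [← mul_inv, hdet, inv_one]
    · simp [hc]
    · simp [hc]
  have hU : star (P * diagonal c) * (P * diagonal c) = 1 := by
    rw [star_mul, mul_assoc, ← mul_assoc (star P), hPP, one_mul, hcc]
  refine ⟨⟨⟨P * diagonal c, mem_unitaryGroup_iff'.2 hU⟩, ?_⟩, ?_⟩
  · show (P * diagonal c).det = 1
    rw [det_mul, det_diagonal, Fin.prod_univ_three]
    simp [hc, hdet0]
  · show matSU A * (P * diagonal c) = P * diagonal c * diagonal d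
    rw [← mul_assoc, hAP, mul_assoc, mul_assoc, diagonal_mul_diagonal, diagonal_mul_diagonal]
    congr 2
    ext i
    exact mul_comm _ _

lemma matSU_mul_star (U : SU 3) : matSU U * star (matSU U) = 1 := mem_unitaryGroup_iff.1 U.1.2

lemma matSU_star_mul (U : SU 3) : star (matSU U) * matSU U = 1 := mem_unitaryGroup_iff'.1 U.1.2

lemma spectrum_conj (A U : SU 3) : spectrum ℂ (matSU (U * A * U⁻¹)) = spectrum ℂ (matSU A) := by
  let u : (Matrix (Fin 3) (Fin 3) ℂ)ˣ :=
    ⟨matSU U, star (matSU U), matSU_mul_star U, matSU_star_mul U⟩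
  exact spectrum.units_conjugate (u := u)

/-! ### Conjugacy classes as sets of eigenvalues -/

/-- The possible spectra: three-element sets of `p`-th roots of `ζ` with product `1`. -/
def eigenSets (p : ℕ) (ζ : ℂ) : Set (Finset ℂ) :=
  {s | s.card = 3 ∧ (∀ x ∈ s, x ^ p = ζ) ∧ ∏ x ∈ s, x = 1}

/-- The possible ordered spectra: injective triples of `p`-th roots of `ζ` with product `1`. -/
def eigenTriples (p : ℕ) (ζ : ℂ) : Set (Fin 3 → ℂ) :=
  {d | Function.Injective d ∧ (∀ i, d i ^ p = ζ) ∧ ∏ i, d i = 1}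

lemma exists_enum (s : Finset ℂ) (h : s.card = 3) :
    ∃ d : Fin 3 → ℂ, Function.Injective d ∧ Finset.univ.image d = s := by
  let e := (s.equivFinOfCardEq h).symm
  refine ⟨fun i => e i, Subtype.val_injective.comp e.injective, ?_⟩
  ext x
  simp only [Finset.mem_image, Finset.mem_univ, true_and]
  constructor
  · rintro ⟨i, rfl⟩; exact (e i).2
  · intro hx; exact ⟨e.symm ⟨x, hx⟩, by simp⟩

lemma image_mem_eigenSets {p : ℕ} {ζ : ℂ} {d : Fin 3 → ℂ} (hd : Function.Injective d) :
    Finset.univ.image d ∈ eigenSets p ζ ↔ d ∈ eigenTriples p ζ := by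
  simp only [eigenSets, eigenTriples, Set.mem_ofPred_eq, Finset.card_image_of_injective _ hd,
    Finset.prod_image hd.injOn, hd]
  simp

/-- The eigenvalues of a matrix counted by `countThree` satisfy the defining conditions of
`eigenTriples`. -/
lemma mem_eigenTriples_of_spectrum {p : ℕ} {ζ : ℂ} (A : SU 3)
    (hA : matSU A ^ p = ζ • (1 : Matrix (Fin 3) (Fin 3) ℂ)) {d : Fin 3 → ℂ}
    (hd : Function.Injective d) (hs : ∀ i, d i ∈ spectrum ℂ (matSU A)) :
    d ∈ eigenTriples p ζ := by
  obtain ⟨U, hU⟩ := exists_diagonalize A d hd hs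
  have hdiag : diagonal d = star (matSU U) * matSU A * matSU U := by
    rw [mul_assoc, hU, ← mul_assoc, matSU_star_mul, one_mul]
  refine ⟨hd, ?_, ?_⟩
  · have hpow : ∀ n : ℕ, matSU A ^ n * matSU U = matSU U * diagonal d ^ n := by
      intro n
      induction n with
      | zero => simp
      | succ k ih => rw [pow_succ, mul_assoc, hU, ← mul_assoc, ih, mul_assoc, ← pow_succ]
    have h := hpow p
    rw [hA, smul_mul_assoc, one_mul] at h
    have h2 : diagonal d ^ p = ζ • (1 : Matrix (Fin 3) (Fin 3) ℂ) := by
      have := congrArg (fun M => star (matSU U) * M) h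
      simp only [mul_smul_comm, matSU_star_mul, ← mul_assoc, one_mul] at this
      exact this.symm
    intro i
    have := congrFun (congrFun h2 i) i
    simpa [diagonal_pow] using this
  · rw [← det_diagonal, hdiag, det_mul, mul_comm, ← det_mul, ← mul_assoc, matSU_mul_star, one_mul]
    exact A.2

lemma countThree_eq (p : ℕ) (hp : 0 < p) (ζ : ℂ) (hζ : ζ ^ 3 = 1) :
    countThree p ζ = Nat.card (eigenSets p ζ) := by
  have hfin : ∀ A : SU 3, (spectrum ℂ (matSU A)).Finite := fun A => Matrix.finite_spectrum _
  unfold countThree numConjClasses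
  refine Nat.card_eq_of_bijective (Quotient.lift
    (fun A => ⟨(hfin A.1).toFinset, ?_⟩) ?_) ⟨?_, ?_⟩
  · have hc : (hfin A.1).toFinset.card = 3 := by
      rw [← Set.ncard_eq_toFinset_card _ (hfin A.1)]; exact A.2.2
    obtain ⟨d, hd, hds⟩ := exists_enum _ hc
    rw [← hds, image_mem_eigenSets hd]
    refine mem_eigenTriples_of_spectrum A.1 A.2.1 hd fun i => ?_
    rw [← (hfin A.1).mem_toFinset, ← hds]
    simp
  · rintro A B ⟨U, hU⟩
    apply Subtype.ext
    simp only [hU, spectrum_conj]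
  · intro x y
    induction x using Quotient.inductionOn with | _ A => ?_
    induction y using Quotient.inductionOn with | _ B => ?_
    intro h
    simp only [Quotient.lift_mk, Subtype.mk.injEq] at h
    apply Quotient.sound
    have hc : (hfin A.1).toFinset.card = 3 := by
      rw [← Set.ncard_eq_toFinset_card _ (hfin A.1)]; exact A.2.2
    obtain ⟨d, hd, hds⟩ := exists_enum _ hc
    obtain ⟨U, hU⟩ := exists_diagonalize A.1 d hd fun i => by
      rw [← (hfin A.1).mem_toFinset, ← hds]
      simp
    obtain ⟨V, hV⟩ := exists_diagonalize B.1 d hd fun i => by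
      rw [← (hfin B.1).mem_toFinset, ← h, ← hds]
      simp
    refine ⟨V * U⁻¹, ?_⟩
    have key : matSU B.1 * matSU V = matSU V * (star (matSU U) * matSU A.1 * matSU U) := by
      rw [hV, mul_assoc (star (matSU U)), hU, ← mul_assoc (star (matSU U)), matSU_star_mul,
        one_mul]
    have key2 : B.1 * V = V * (U⁻¹ * A.1 * U) := Subtype.ext (Subtype.ext key)
    rw [eq_mul_inv_of_mul_eq key2]
    group
  · rintro ⟨s, hs⟩
    obtain ⟨d, hd, rfl⟩ := exists_enum s hs.1
    obtain ⟨-, hdp, hd1⟩ := (image_mem_eigenSets hd).1 hs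
    have hnorm : ∀ i, star (d i) * d i = 1 := by
      intro i
      have h1 : d i ^ (p * 3) = 1 := by rw [pow_mul, hdp, hζ]
      have h2 : ‖d i‖ = 1 := Complex.norm_eq_one_of_pow_eq_one h1 (by omega)
      rw [Complex.star_def, mul_comm, Complex.mul_conj, Complex.normSq_eq_norm_sq, h2]
      simp
    have hU : star (diagonal d) * diagonal d = 1 := by
      rw [star_eq_conjTranspose, diagonal_conjTranspose, diagonal_mul_diagonal, ← diagonal_one]
      congr 1
      ext i
      exact hnorm i
    let D : SU 3 := ⟨⟨diagonal d, mem_unitaryGroup_iff'.2 hU⟩, by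
      show (diagonal d).det = 1
      rw [det_diagonal, hd1]⟩
    have hspec : spectrum ℂ (matSU D) = Set.range d := spectrum_diagonal d
    have hD : matSU D ^ p = ζ • (1 : Matrix (Fin 3) (Fin 3) ℂ) ∧
        (spectrum ℂ (matSU D)).ncard = 3 := by
      refine ⟨?_, ?_⟩
      · show diagonal d ^ p = _
        rw [diagonal_pow, smul_one_eq_diagonal]
        congr 1
        ext i
        exact hdp i
      · rw [hspec, ← Set.image_univ, Set.ncard_image_of_injective _ hd, Set.ncard_univ]
        simp
    refine ⟨Quotient.mk _ ⟨D, hD⟩, ?_⟩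
    apply Subtype.ext
    simp only [Quotient.lift_mk]
    ext x
    simp [hspec]

/-- Every three-element set has `6` enumerations. -/
lemma card_eigenTriples (p : ℕ) (ζ : ℂ) :
    Nat.card (eigenTriples p ζ) = 6 * Nat.card (eigenSets p ζ) := by
  choose e he hes using fun s : eigenSets p ζ => exists_enum s.1 s.2.1
  have h6 : Nat.card (Equiv.Perm (Fin 3)) = 6 := by
    rw [Nat.card_eq_fintype_card, Fintype.card_perm]; rfl
  have himg : ∀ (s : eigenSets p ζ) (σ : Equiv.Perm (Fin 3)),
      Finset.univ.image (e s ∘ σ) = s := by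
    intro s σ
    rw [← Finset.image_image, Finset.image_univ_equiv, hes]
  rw [← h6, ← Nat.card_prod]
  symm
  refine Nat.card_eq_of_bijective (fun x => ⟨e x.2 ∘ x.1, ?_⟩) ⟨?_, ?_⟩
  · have hinj := (he x.2).comp x.1.injective
    rw [← image_mem_eigenSets hinj, himg]
    exact x.2.2
  · rintro ⟨σ, s⟩ ⟨τ, t⟩ h
    have h' : e s ∘ σ = e t ∘ τ := congrArg Subtype.val h
    have hst : s = t := by
      apply Subtype.ext
      rw [← himg s σ, h', himg]
    subst hst
    have : σ = τ := by
      ext i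
      exact congrArg _ (he s (congrFun h' i))
    rw [this]
  · rintro ⟨d, hd⟩
    let s : eigenSets p ζ := ⟨Finset.univ.image d, (image_mem_eigenSets hd.1).2 hd⟩
    have hmem : ∀ i, ∃ j, e s j = d i := by
      intro i
      have : d i ∈ Finset.univ.image (e s) := by rw [hes]; simp [s]
      simpa using this
    choose σ hσ using hmem
    have hinj : Function.Injective σ := by
      intro i j hij
      apply hd.1
      rw [← hσ, ← hσ, hij]
    refine ⟨⟨Equiv.ofBijective σ (Finite.injective_iff_bijective.1 hinj), s⟩, ?_⟩
    apply Subtype.ext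
    funext i
    exact hσ i

/-! ### Counting the ordered spectra -/

lemma card_pow_eq (p : ℕ) (hp : 0 < p) {ζ : ℂ} (hζ : ζ ≠ 0) :
    ∃ R : Finset ℂ, (∀ x, x ∈ R ↔ x ^ p = ζ) ∧ R.card = p := by
  have hprim := Complex.isPrimitiveRoot_exp p hp.ne'
  obtain ⟨α, hα⟩ := IsAlgClosed.exists_pow_nat_eq ζ hp
  refine ⟨Polynomial.nthRootsFinset p ζ, fun x => Polynomial.mem_nthRootsFinset hp ζ, ?_⟩
  rw [Polynomial.nthRootsFinset_def, Multiset.toFinset_card_of_nodup (hprim.nthRoots_nodup hζ),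
    hprim.card_nthRoots, if_pos ⟨α, hα⟩]

/-- Dropping the third coordinate, which is `(a * b)⁻¹`, turns ordered spectra into pairs; the
inverse of `a * b` is automatically a `p`-th root of `ζ` because `ζ ^ 3 = 1`. -/
lemma card_eigenTriples_eq_pairs (p : ℕ) {ζ : ℂ} (hp : 0 < p) (hζ : ζ ^ 3 = 1) (R : Finset ℂ)
    (hR : ∀ x, x ∈ R ↔ x ^ p = ζ) :
    Nat.card (eigenTriples p ζ) = ((R ×ˢ R).filter
      fun x => x.1 ≠ x.2 ∧ x.1 ^ 2 * x.2 ≠ 1 ∧ x.1 * x.2 ^ 2 ≠ 1).card := by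
  have hζ0 : ζ ≠ 0 := by rintro rfl; norm_num at hζ
  have h0 : ∀ {x : ℂ}, x ^ p = ζ → x ≠ 0 := by
    rintro x hx rfl
    rw [zero_pow hp.ne'] at hx
    exact hζ0 hx.symm
  rw [← Nat.card_eq_finsetCard]
  refine Nat.card_eq_of_bijective (fun d => ⟨(d.1 0, d.1 1), ?_⟩) ⟨?_, ?_⟩
  · obtain ⟨d, hd, hdp, hd1⟩ := d
    rw [Fin.prod_univ_three] at hd1
    have h01 : d 0 ≠ d 1 := hd.ne (by decide)
    have h02 : d 0 ≠ d 2 := hd.ne (by decide)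
    have h12 : d 1 ≠ d 2 := hd.ne (by decide)
    have hn : d 0 * d 1 ≠ 0 := mul_ne_zero (h0 (hdp 0)) (h0 (hdp 1))
    simp only [Finset.mem_filter, Finset.mem_product, hR]
    refine ⟨⟨hdp 0, hdp 1⟩, h01, fun h => h02 ?_, fun h => h12 ?_⟩
    · exact mul_left_cancel₀ hn (by rw [hd1, ← h]; ring)
    · exact mul_left_cancel₀ hn (by rw [hd1, ← h]; ring)
  · rintro ⟨d, hd, hdp, hd1⟩ ⟨e, he, hep, he1⟩ h
    simp only [Subtype.mk.injEq, Prod.mk.injEq] at h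
    obtain ⟨ha, hb⟩ := h
    rw [Fin.prod_univ_three] at hd1 he1
    have hn : d 0 * d 1 ≠ 0 := mul_ne_zero (h0 (hdp 0)) (h0 (hdp 1))
    have hc : d 2 = e 2 := mul_left_cancel₀ hn (by rw [hd1, ha, hb, he1])
    apply Subtype.ext
    funext i
    fin_cases i <;> assumption
  · rintro ⟨⟨a, b⟩, hab⟩
    simp only [Finset.mem_filter, Finset.mem_product, hR] at hab
    obtain ⟨⟨ha, hb⟩, h1, h2, h3⟩ := hab
    have ha0 := h0 ha
    have hb0 := h0 hb
    obtain ⟨c, habc⟩ : ∃ c, a * b * c = 1 :=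
      ⟨(a * b)⁻¹, mul_inv_cancel₀ (mul_ne_zero ha0 hb0)⟩
    have hc : c ^ p = ζ := by
      have h := congrArg (· ^ p) habc
      simp only [mul_pow, ha, hb, one_pow] at h
      exact mul_left_cancel₀ (mul_ne_zero hζ0 hζ0) (by rw [h, ← hζ]; ring)
    have hac : a ≠ c := by
      rintro rfl
      exact h2 (by rw [← habc]; ring)
    have hbc : b ≠ c := by
      rintro rfl
      exact h3 (by rw [← habc]; ring)
    refine ⟨⟨![a, b, c], ?_, ?_, ?_⟩, rfl⟩
    · intro i j hij
      fin_cases i <;> fin_cases j <;> simp_all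
    · intro i
      fin_cases i
      · exact ha
      · exact hb
      · exact hc
    · rw [Fin.prod_univ_three]
      exact habc

/-- Inclusion-exclusion: the three diagonals `a = b`, `a = c`, `b = c` in the `p ^ 2` triples
`(a, b, c)` with `a * b * c = 1` have `p` elements each, and any two of them meet in the constant
triples, given by the cube roots of unity whose `p`-th power is `ζ`. -/
lemma card_pairs (p : ℕ) {ζ : ℂ} (hp : 0 < p) (hζ : ζ ^ 3 = 1) (R : Finset ℂ)
    (hR : ∀ x, x ∈ R ↔ x ^ p = ζ) (hc : R.card = p) :
    (((R ×ˢ R).filter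
      fun x => x.1 ≠ x.2 ∧ x.1 ^ 2 * x.2 ≠ 1 ∧ x.1 * x.2 ^ 2 ≠ 1).card : ℤ)
      = (p : ℤ) ^ 2 - 3 * p + 2 * (R.filter fun x => x ^ 3 = 1).card := by
  have hζ0 : ζ ≠ 0 := by rintro rfl; norm_num at hζ
  have h0 : ∀ {x : ℂ}, x ∈ R → x ≠ 0 := by
    rintro x hx rfl
    rw [hR, zero_pow hp.ne'] at hx
    exact hζ0 hx.symm
  have hinv : ∀ {x : ℂ}, x ∈ R → (x ^ 2)⁻¹ ∈ R := by
    intro x hx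
    have hx' := (hR x).1 hx
    rw [hR, inv_pow, ← pow_mul, mul_comm, pow_mul, hx']
    field_simp
    rw [← hζ]
  have hA : ((R ×ˢ R).filter fun x => x.1 = x.2).card = p := by
    rw [← hc]
    refine Finset.card_bij' (fun x _ => x.1) (fun a _ => (a, a)) ?_ ?_ ?_ ?_
    · simp +contextual
    · simp
    · rintro ⟨a, b⟩ h
      simp only [Finset.mem_filter] at h
      rw [← h.2]
    · simp
  have hB : ((R ×ˢ R).filter fun x => x.1 ^ 2 * x.2 = 1).card = p := by
    rw [← hc]
    refine Finset.card_bij' (fun x _ => x.1) (fun a _ => (a, (a ^ 2)⁻¹)) ?_ ?_ ?_ ?_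
    · simp +contextual
    · intro a ha
      simp only [Finset.mem_filter, Finset.mem_product]
      exact ⟨⟨ha, hinv ha⟩, mul_inv_cancel₀ (pow_ne_zero _ (h0 ha))⟩
    · rintro ⟨a, b⟩ h
      simp only [Finset.mem_filter] at h
      exact Prod.ext rfl (eq_inv_of_mul_eq_one_right h.2).symm
    · simp
  have hC : ((R ×ˢ R).filter fun x => x.1 * x.2 ^ 2 = 1).card = p := by
    rw [← hc]
    refine Finset.card_bij' (fun x _ => x.2) (fun a _ => ((a ^ 2)⁻¹, a)) ?_ ?_ ?_ ?_
    · simp +contextual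
    · intro a ha
      simp only [Finset.mem_filter, Finset.mem_product]
      exact ⟨⟨hinv ha, ha⟩, inv_mul_cancel₀ (pow_ne_zero _ (h0 ha))⟩
    · rintro ⟨a, b⟩ h
      simp only [Finset.mem_filter] at h
      exact Prod.ext (eq_inv_of_mul_eq_one_left h.2).symm rfl
    · simp
  have hE : ((R ×ˢ R).filter fun x => x.1 = x.2 ∧ x.1 ^ 3 = 1).card
      = (R.filter fun x => x ^ 3 = 1).card := by
    refine Finset.card_bij' (fun x _ => x.1) (fun a _ => (a, a)) ?_ ?_ ?_ ?_
    · simp +contextual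
    · simp
    · rintro ⟨a, b⟩ h
      simp only [Finset.mem_filter] at h
      rw [← h.2.1]
    · simp
  have hT : (R ×ˢ R).card = p ^ 2 := by rw [Finset.card_product, hc, sq]
  -- The inclusion-exclusion identity, pointwise for indicator functions.
  have hpt : ∀ x ∈ R ×ˢ R,
      (if x.1 ≠ x.2 ∧ x.1 ^ 2 * x.2 ≠ 1 ∧ x.1 * x.2 ^ 2 ≠ 1 then (1 : ℤ) else 0)
        + (if x.1 = x.2 then 1 else 0) + (if x.1 ^ 2 * x.2 = 1 then 1 else 0)
        + (if x.1 * x.2 ^ 2 = 1 then 1 else 0)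
      = 1 + 2 * (if x.1 = x.2 ∧ x.1 ^ 3 = 1 then 1 else 0) := by
    rintro ⟨a, b⟩ hab
    rw [Finset.mem_product] at hab
    have ha0 := h0 hab.1
    have hb0 := h0 hab.2
    dsimp only at ha0 hb0 ⊢
    by_cases h1 : a = b
    · subst h1
      have e1 : a ^ 2 * a = a ^ 3 := by ring
      have e2 : a * a ^ 2 = a ^ 3 := by ring
      rw [e1, e2]
      by_cases h2 : a ^ 3 = 1 <;> simp [h2]
    · by_cases h2 : a ^ 2 * b = 1
      · have h3 : a * b ^ 2 ≠ 1 := by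
          intro h3
          apply h1
          apply mul_left_cancel₀ (mul_ne_zero ha0 hb0)
          linear_combination h2 - h3
        simp [h1, h2, h3]
      · by_cases h3 : a * b ^ 2 = 1 <;> simp [h1, h2, h3]
  have hsum := Finset.sum_congr rfl hpt
  simp only [Finset.sum_add_distrib, ← Finset.mul_sum, Finset.sum_boole, hA, hB, hC, hE,
    Finset.sum_const, hT, nsmul_eq_mul, mul_one] at hsum
  push_cast at hsum
  linarith

lemma omega3_prim : IsPrimitiveRoot omega3 3 := by
  have := Complex.isPrimitiveRoot_exp 3 (by norm_num)
  simpa [omega3] using this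

/-- The cube roots of unity with `p`-th power `ω ^ l`, written as powers of `ω`. -/
lemma card_cube_roots (p l : ℕ) (R : Finset ℂ) (hR : ∀ x, x ∈ R ↔ x ^ p = omega3 ^ l) :
    (R.filter fun x => x ^ 3 = 1).card
      = ((Finset.range 3).filter fun k => k * p % 3 = l % 3).card := by
  have hω := omega3_prim
  have hmod : ∀ m n : ℕ, omega3 ^ m = omega3 ^ n ↔ m % 3 = n % 3 := by
    intro m n
    rw [← pow_mod_orderOf omega3 m, ← pow_mod_orderOf omega3 n, ← hω.eq_orderOf]
    exact ⟨fun h => hω.pow_inj (Nat.mod_lt _ (by norm_num)) (Nat.mod_lt _ (by norm_num)) h,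
      fun h => by rw [h]⟩
  symm
  refine Finset.card_bij (fun k _ => omega3 ^ k) ?_ ?_ ?_
  · intro k hk
    simp only [Finset.mem_filter, Finset.mem_range] at hk
    simp only [Finset.mem_filter, hR]
    refine ⟨?_, ?_⟩
    · rw [← pow_mul, hmod]; exact hk.2
    · rw [← pow_mul, mul_comm, pow_mul, hω.pow_eq_one, one_pow]
  · intro a ha b hb h
    simp only [Finset.mem_filter, Finset.mem_range] at ha hb
    exact hω.pow_inj ha.1 hb.1 h
  · intro x hx
    simp only [Finset.mem_filter, hR] at hx
    obtain ⟨k, hk, rfl⟩ := hω.eq_pow_of_pow_eq_one hx.2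
    refine ⟨k, ?_, rfl⟩
    simp only [Finset.mem_filter, Finset.mem_range]
    refine ⟨hk, ?_⟩
    rw [← hmod, pow_mul]
    exact hx.1

lemma six_mul_countThree (p l : ℕ) (hp : 0 < p) :
    6 * (countThree p (omega3 ^ l) : ℤ) = (p : ℤ) ^ 2 - 3 * p
      + 2 * ((Finset.range 3).filter fun k => k * (p % 3) % 3 = l % 3).card := by
  have hω := omega3_prim
  have hζ : (omega3 ^ l) ^ 3 = 1 := by
    rw [← pow_mul, mul_comm, pow_mul, hω.pow_eq_one, one_pow]
  obtain ⟨R, hR, hc⟩ := card_pow_eq p hp (pow_ne_zero l (hω.ne_zero (by norm_num)))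
  have hpairs := card_pairs p hp hζ R hR hc
  rw [← card_eigenTriples_eq_pairs p hp hζ R hR, card_eigenTriples, ← countThree_eq p hp _ hζ,
    card_cube_roots p l R hR] at hpairs
  simp only [Nat.mul_mod_mod]
  exact_mod_cast hpairs

end

/-- The number of four-dimensional (Type II) components of the irreducible
`SU(3)` representation variety of the knot complement `Z`:
`12·Σ_{ζ³=1} f(p,ζ)·f(q,ζ) = (p−1)(p−2)(q−1)(q−2)`. -/
theorem count_typeII_components (p q : ℕ) (hp : 0 < p) (hq : 0 < q)
    (hpq : Nat.Coprime p q) :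
    (12 : ℤ) * ∑ l ∈ Finset.range 3, (countThree p (omega3 ^ l) * countThree q (omega3 ^ l) : ℤ)
      = ((p : ℤ) - 1) * ((p : ℤ) - 2) * ((q : ℤ) - 1) * ((q : ℤ) - 2) := by
  have hcop : ¬ (p % 3 = 0 ∧ q % 3 = 0) := by
    rintro ⟨h1, h2⟩
    have := Nat.dvd_gcd (Nat.dvd_of_mod_eq_zero h1) (Nat.dvd_of_mod_eq_zero h2)
    rw [hpq] at this
    norm_num at this
  have hP := fun l => six_mul_countThree p l hp
  have hQ := fun l => six_mul_countThree q l hq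
  simp only [Finset.sum_range_succ, Finset.sum_range_zero, zero_add]
  have hP0 := hP 0
  have hP1 := hP 1
  have hP2 := hP 2
  have hQ0 := hQ 0
  have hQ1 := hQ 1
  have hQ2 := hQ 2
  clear hP hQ
  generalize (countThree p (omega3 ^ 0) : ℤ) = a0 at *
  generalize (countThree p (omega3 ^ 1) : ℤ) = a1 at *
  generalize (countThree p (omega3 ^ 2) : ℤ) = a2 at *
  generalize (countThree q (omega3 ^ 0) : ℤ) = b0 at *
  generalize (countThree q (omega3 ^ 1) : ℤ) = b1 at *
  generalize (countThree q (omega3 ^ 2) : ℤ) = b2 at *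
  have card0 : ∀ l < 3, ((Finset.range 3).filter fun k => k * 0 % 3 = l % 3).card
      = if l = 0 then 3 else 0 := by decide
  have card1 : ∀ l < 3, ((Finset.range 3).filter fun k => k * 1 % 3 = l % 3).card = 1 := by
    decide
  have card2 : ∀ l < 3, ((Finset.range 3).filter fun k => k * 2 % 3 = l % 3).card = 1 := by
    decide
  have hp3 : p % 3 = 0 ∨ p % 3 = 1 ∨ p % 3 = 2 := by omega
  have hq3 : q % 3 = 0 ∨ q % 3 = 1 ∨ q % 3 = 2 := by omega
  have key : 36 * (a0 * b0 + a1 * b1 + a2 * b2)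
      = (6 * a0) * (6 * b0) + (6 * a1) * (6 * b1) + (6 * a2) * (6 * b2) := by ring
  have goal3 : 36 * (a0 * b0 + a1 * b1 + a2 * b2)
      = 3 * (((p : ℤ) - 1) * ((p : ℤ) - 2) * ((q : ℤ) - 1) * ((q : ℤ) - 2)) := by
    rw [key, hP0, hP1, hP2, hQ0, hQ1, hQ2]
    rcases hp3 with h | h | h <;> rcases hq3 with h' | h' | h'
    · exact absurd ⟨h, h'⟩ hcop
    all_goals
      simp only [h, h', card0 0 (by norm_num), card0 1 (by norm_num), card0 2 (by norm_num),
        card1 0 (by norm_num), card1 1 (by norm_num), card1 2 (by norm_num),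
        card2 0 (by norm_num), card2 1 (by norm_num), card2 2 (by norm_num),
        reduceIte, one_ne_zero, OfNat.ofNat_ne_zero]
      push_cast
      ring
  linarith
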